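/- On the Robinson–Trautman spacetime with F₁ := f_x² + f_y² - f(f_{xx} + f_{yy}) and F₁ - 2a + 4br ≠ 0, the vector field X = ∂/∂r satisfies the tensor identity L_X g + (2r/(F₁ - 2a + 4br)) S + (8b/(F₁ - 2a + 4br)) g - (2(-d + 2br²)/r²) η⊗η = 0, where η is the 1-form with components (1,0,0,0) in coordinates (t,r,x,y). -/

import Mathlib

open scoped BigOperators

noncomputable section

/-- Points of the coordinate chart `(t,r,x,y)`. -/
abbrev RTPt := Fin 4 → ℝ

/-- Partial derivative in coordinate direction `i`. -/
def RTpd (i : Fin 4) (F : RTPt → ℝ) (p : RTPt) : ℝ :=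
  deriv (fun s => F (Function.update p i s)) (p i)

/-- partial derivative of `f(x,y)` in `x`. -/
def pX (f : ℝ → ℝ → ℝ) (x y : ℝ) : ℝ := deriv (fun s => f s y) x

/-- partial derivative of `f(x,y)` in `y`. -/
def pY (f : ℝ → ℝ → ℝ) (x y : ℝ) : ℝ := deriv (fun s => f x s) y

/-- The Robinson–Trautman metric components. -/
def RTg (a b d : ℝ) (f : ℝ → ℝ → ℝ) (i j : Fin 4) (p : RTPt) : ℝ :=
  if i = 0 ∧ j = 0 then -2 * (a - 2 * b * p 1 - d / p 1)
  else if (i = 0 ∧ j = 1) ∨ (i = 1 ∧ j = 0) then 1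
  else if (i = 2 ∧ j = 2) ∨ (i = 3 ∧ j = 3) then -(p 1)^2 / (f (p 2) (p 3))^2
  else 0

/-- The inverse Robinson–Trautman metric components. -/
def RTgInv (a b d : ℝ) (f : ℝ → ℝ → ℝ) (i j : Fin 4) (p : RTPt) : ℝ :=
  if i = 1 ∧ j = 1 then 2 * (a - 2 * b * p 1 - d / p 1)
  else if (i = 0 ∧ j = 1) ∨ (i = 1 ∧ j = 0) then 1
  else if (i = 2 ∧ j = 2) ∨ (i = 3 ∧ j = 3) then -(f (p 2) (p 3))^2 / (p 1)^2
  else 0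

/-- Christoffel symbols `Γ^k_{ij}` of the Levi-Civita connection of the RT metric. -/
def RTGamma (a b d : ℝ) (f : ℝ → ℝ → ℝ) (k i j : Fin 4) (p : RTPt) : ℝ :=
  (1/2) * ∑ l : Fin 4, RTgInv a b d f k l p *
    (RTpd i (RTg a b d f l j) p + RTpd j (RTg a b d f l i) p - RTpd l (RTg a b d f i j) p)

/-- `(0,4)` Riemann curvature tensor
`R_{pqrs} = g_{pα}(∂_s Γ^α_{qr} - ∂_r Γ^α_{qs} + Γ^β_{qr}Γ^α_{βs} - Γ^β_{qs}Γ^α_{βr})`. -/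
def RTRiem (a b d : ℝ) (f : ℝ → ℝ → ℝ) (i j k l : Fin 4) (p : RTPt) : ℝ :=
  ∑ α : Fin 4, RTg a b d f i α p *
    (RTpd l (RTGamma a b d f α j k) p - RTpd k (RTGamma a b d f α j l) p
      + ∑ β : Fin 4, (RTGamma a b d f β j k p * RTGamma a b d f α β l p
          - RTGamma a b d f β j l p * RTGamma a b d f α β k p))

/-- Ricci tensor `S_{ij} = R^k_{ikj}` of the RT metric. -/
def RTRic (a b d : ℝ) (f : ℝ → ℝ → ℝ) (i j : Fin 4) (p : RTPt) : ℝ :=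
  ∑ k : Fin 4, ∑ l : Fin 4, RTgInv a b d f k l p * RTRiem a b d f l i k j p

/-- Scalar curvature of the RT metric. -/
def RTScal (a b d : ℝ) (f : ℝ → ℝ → ℝ) (p : RTPt) : ℝ :=
  ∑ i : Fin 4, ∑ j : Fin 4, RTgInv a b d f i j p * RTRic a b d f i j p

/-- Lie derivative of a `(0,2)` tensor field along a vector field `X`. -/
def RTlie2 (X : RTPt → Fin 4 → ℝ) (T : Fin 4 → Fin 4 → RTPt → ℝ) (i j : Fin 4) (p : RTPt) : ℝ :=
  (∑ k : Fin 4, X p k * RTpd k (T i j) p)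
  + (∑ k : Fin 4, T k j p * RTpd i (fun q => X q k) p)
  + (∑ k : Fin 4, T i k p * RTpd j (fun q => X q k) p)

/-- Lie derivative of a `(0,4)` tensor field along a vector field `X`. -/
def RTlie4 (X : RTPt → Fin 4 → ℝ) (T : Fin 4 → Fin 4 → Fin 4 → Fin 4 → RTPt → ℝ)
    (i j k l : Fin 4) (p : RTPt) : ℝ :=
  (∑ m : Fin 4, X p m * RTpd m (T i j k l) p)
  + (∑ m : Fin 4, T m j k l p * RTpd i (fun q => X q m) p)
  + (∑ m : Fin 4, T i m k l p * RTpd j (fun q => X q m) p)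
  + (∑ m : Fin 4, T i j m l p * RTpd k (fun q => X q m) p)
  + (∑ m : Fin 4, T i j k m p * RTpd l (fun q => X q m) p)

/-- Kulkarni–Nomizu product of two `(0,2)` tensor fields. -/
def RTKN (A B : Fin 4 → Fin 4 → RTPt → ℝ) (i j k l : Fin 4) (p : RTPt) : ℝ :=
  A i l p * B j k p - A i k p * B j l p + A j k p * B i l p - A j l p * B i k p

/-- `F₁ = f_x² + f_y² - f(f_{xx} + f_{yy})`. -/
def F1 (f : ℝ → ℝ → ℝ) (x y : ℝ) : ℝ :=
  (pX f x y)^2 + (pY f x y)^2 - f x y * (pX (pX f) x y + pY (pY f) x y)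

/-- `F₁ᵐ = f_x² + f_y² - f(f_{xx} - f_{yy})`. -/
def F1m (f : ℝ → ℝ → ℝ) (x y : ℝ) : ℝ :=
  (pX f x y)^2 + (pY f x y)^2 - f x y * (pX (pX f) x y - pY (pY f) x y)

/-- `F₁₁` from the paper. -/
def F11 (a b : ℝ) (f : ℝ → ℝ → ℝ) (r x y : ℝ) : ℝ :=
  -2*(pX f x y)^3
  + pX f x y * (4*a - 16*b*r - 2*(pY f x y)^2 + f x y * (pY (pY f) x y + 3*pX (pX f) x y))
  - f x y * (-2*pY f x y * pY (pX f) x y + f x y * (pX (pX (pX f)) x y + pY (pY (pX f)) x y))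

/-- `F₁₃` from the paper. -/
def F13 (a b : ℝ) (f : ℝ → ℝ → ℝ) (r x y : ℝ) : ℝ :=
  -2*(pY f x y)^3
  + pY f x y * (4*a - 16*b*r - 2*(pX f x y)^2 + f x y * (3*pY (pY f) x y + pX (pX f) x y))
  - f x y * (-2*pX f x y * pY (pX f) x y + f x y * (pY (pY (pY f)) x y + pY (pX (pX f)) x y))

open Filter Topology Function

/-! Replace `a - 2 b r - d / r` by an arbitrary profile `h(r)` and put `P = f_x / f`,
`Q = f_y / f`. In terms of `η = dt` and `δ = dx² + dy²` the Ricci tensor and the radial derivative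
of the metric are `S = κ g + (D / f²) δ` and `∂_r g = -2 h' η ⊗ η - (2 r / f²) δ`, where
`κ = h'' + 2 h' / r` and `D = F₁ - 2 h + r² h''`. As `L_X g = ∂_r g` for `X = ∂/∂r`, adding
`(2 r / D) (S - κ g)` cancels the `δ` part. All of `f` enters `S` through `P_x + Q_y = -F₁ / f²` and
the closedness `Q_x = P_y` of `d log f`. -/

section NormedSpace

variable {E F : Type*} [NormedAddCommGroup E] [NormedSpace ℝ E] [NormedAddCommGroup F]
  [NormedSpace ℝ F] {g : E → F} {z : E}

theorem eventually_differentiableAt_of_contDiffAt (hg : ContDiffAt ℝ 1 g z) :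
    ∀ᶠ w in 𝓝 z, DifferentiableAt ℝ g w :=
  (hg.eventually (by simp)).mono fun _ hw => hw.differentiableAt one_ne_zero

theorem hasFDerivAt_fderiv_apply (hg : ContDiffAt ℝ 2 g z) (e : E) :
    HasFDerivAt (fun w => fderiv ℝ g w e) ((fderiv ℝ (fderiv ℝ g) z).flip e) z := by
  have hd : DifferentiableAt ℝ (fderiv ℝ g) z :=
    (hg.fderiv_right (m := 1) (by norm_num)).differentiableAt one_ne_zero
  simpa using hd.hasFDerivAt.clm_apply (hasFDerivAt_const e z)

end NormedSpace

section PartialDerivatives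

variable {f u v : ℝ → ℝ → ℝ} {x y : ℝ}

theorem hasDerivAt_fderiv_fst (hf : DifferentiableAt ℝ (uncurry f) (x, y)) :
    HasDerivAt (fun s => f s y) (fderiv ℝ (uncurry f) (x, y) (1, 0)) x :=
  hf.hasFDerivAt.comp_hasDerivAt (f := fun s => (s, y)) x
    ((hasDerivAt_id x).prodMk (hasDerivAt_const x y))

theorem hasDerivAt_fderiv_snd (hf : DifferentiableAt ℝ (uncurry f) (x, y)) :
    HasDerivAt (fun s => f x s) (fderiv ℝ (uncurry f) (x, y) (0, 1)) y :=
  hf.hasFDerivAt.comp_hasDerivAt (f := fun s => (x, s)) y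
    ((hasDerivAt_const y x).prodMk (hasDerivAt_id y))

theorem hasDerivAt_pX (hf : DifferentiableAt ℝ (uncurry f) (x, y)) :
    HasDerivAt (fun s => f s y) (pX f x y) x :=
  (hasDerivAt_fderiv_fst hf).differentiableAt.hasDerivAt

theorem hasDerivAt_pY (hf : DifferentiableAt ℝ (uncurry f) (x, y)) :
    HasDerivAt (fun s => f x s) (pY f x y) y :=
  (hasDerivAt_fderiv_snd hf).differentiableAt.hasDerivAt

theorem pX_div (hu : DifferentiableAt ℝ (uncurry u) (x, y))
    (hv : DifferentiableAt ℝ (uncurry v) (x, y)) (hv0 : v x y ≠ 0) :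
    pX (fun x y => u x y / v x y) x y = (pX u x y * v x y - u x y * pX v x y) / v x y ^ 2 :=
  ((hasDerivAt_pX hu).fun_div (hasDerivAt_pX hv) hv0).deriv

theorem pY_div (hu : DifferentiableAt ℝ (uncurry u) (x, y))
    (hv : DifferentiableAt ℝ (uncurry v) (x, y)) (hv0 : v x y ≠ 0) :
    pY (fun x y => u x y / v x y) x y = (pY u x y * v x y - u x y * pY v x y) / v x y ^ 2 :=
  ((hasDerivAt_pY hu).fun_div (hasDerivAt_pY hv) hv0).deriv

theorem uncurry_pX_eventuallyEq_fderiv {z : ℝ × ℝ} (hf : ContDiffAt ℝ 1 (uncurry f) z) :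
    uncurry (pX f) =ᶠ[𝓝 z] fun w => fderiv ℝ (uncurry f) w (1, 0) :=
  (eventually_differentiableAt_of_contDiffAt hf).mono fun _ hw => (hasDerivAt_fderiv_fst hw).deriv

theorem uncurry_pY_eventuallyEq_fderiv {z : ℝ × ℝ} (hf : ContDiffAt ℝ 1 (uncurry f) z) :
    uncurry (pY f) =ᶠ[𝓝 z] fun w => fderiv ℝ (uncurry f) w (0, 1) :=
  (eventually_differentiableAt_of_contDiffAt hf).mono fun _ hw => (hasDerivAt_fderiv_snd hw).deriv

theorem differentiableAt_uncurry_pX {z : ℝ × ℝ} (hf : ContDiffAt ℝ 2 (uncurry f) z) :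
    DifferentiableAt ℝ (uncurry (pX f)) z :=
  (hasFDerivAt_fderiv_apply hf (1, 0)).differentiableAt.congr_of_eventuallyEq
    (uncurry_pX_eventuallyEq_fderiv (hf.of_le one_le_two))

theorem differentiableAt_uncurry_pY {z : ℝ × ℝ} (hf : ContDiffAt ℝ 2 (uncurry f) z) :
    DifferentiableAt ℝ (uncurry (pY f)) z :=
  (hasFDerivAt_fderiv_apply hf (0, 1)).differentiableAt.congr_of_eventuallyEq
    (uncurry_pY_eventuallyEq_fderiv (hf.of_le one_le_two))

theorem pX_pY_eq_pY_pX (hf : ContDiffAt ℝ 2 (uncurry f) (x, y)) :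
    pX (pY f) x y = pY (pX f) x y := by
  have hf₁ : ContDiffAt ℝ 1 (uncurry f) (x, y) := hf.of_le one_le_two
  calc pX (pY f) x y
      = fderiv ℝ (uncurry (pY f)) (x, y) (1, 0) :=
        (hasDerivAt_fderiv_fst (differentiableAt_uncurry_pY hf)).deriv
    _ = fderiv ℝ (fderiv ℝ (uncurry f)) (x, y) (1, 0) (0, 1) := by
        rw [(uncurry_pY_eventuallyEq_fderiv hf₁).fderiv_eq,
          (hasFDerivAt_fderiv_apply hf _).fderiv, ContinuousLinearMap.flip_apply]
    _ = fderiv ℝ (fderiv ℝ (uncurry f)) (x, y) (0, 1) (1, 0) :=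
        (hf.isSymmSndFDerivAt (by simp)).eq (1, 0) (0, 1)
    _ = fderiv ℝ (uncurry (pX f)) (x, y) (0, 1) := by
        rw [(uncurry_pX_eventuallyEq_fderiv hf₁).fderiv_eq,
          (hasFDerivAt_fderiv_apply hf _).fderiv, ContinuousLinearMap.flip_apply]
    _ = pY (pX f) x y :=
        (hasDerivAt_fderiv_snd (differentiableAt_uncurry_pX hf)).deriv.symm

/-- The `x`-component `f_x / f` of the logarithmic differential of `f`, called `P` in the header. -/
def dlogX (f : ℝ → ℝ → ℝ) (x y : ℝ) : ℝ := pX f x y / f x y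

/-- The `y`-component `f_y / f` of the logarithmic differential of `f`, called `Q` in the header. -/
def dlogY (f : ℝ → ℝ → ℝ) (x y : ℝ) : ℝ := pY f x y / f x y

theorem pX_dlogY_eq_pY_dlogX (hf : ContDiffAt ℝ 2 (uncurry f) (x, y)) (hf0 : f x y ≠ 0) :
    pX (dlogY f) x y = pY (dlogX f) x y := by
  have hd : DifferentiableAt ℝ (uncurry f) (x, y) := hf.differentiableAt two_ne_zero
  unfold dlogX dlogY
  rw [pX_div (differentiableAt_uncurry_pY hf) hd hf0,
    pY_div (differentiableAt_uncurry_pX hf) hd hf0, pX_pY_eq_pY_pX hf]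
  ring

theorem pX_dlogX_add_pY_dlogY (hf : ContDiffAt ℝ 2 (uncurry f) (x, y)) (hf0 : f x y ≠ 0) :
    pX (dlogX f) x y + pY (dlogY f) x y = -F1 f x y / f x y ^ 2 := by
  have hd : DifferentiableAt ℝ (uncurry f) (x, y) := hf.differentiableAt two_ne_zero
  unfold dlogX dlogY F1
  rw [pX_div (differentiableAt_uncurry_pX hf) hd hf0,
    pY_div (differentiableAt_uncurry_pY hf) hd hf0]
  ring

end PartialDerivatives

section CoordinateDerivatives

theorem RTpd_congr_of_eventuallyEq {F G : RTPt → ℝ} {p : RTPt} (h : F =ᶠ[𝓝 p] G) (l : Fin 4) :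
    RTpd l F p = RTpd l G p := by
  have update_tendsto : Tendsto (update p l) (𝓝 (p l)) (𝓝 p) := by
    simpa using (continuous_const.update l continuous_id : Continuous (update p l)).tendsto (p l)
  exact EventuallyEq.deriv_eq (update_tendsto.eventually h)

theorem RTpd_const (l : Fin 4) (c : ℝ) (p : RTPt) : RTpd l (fun _ => c) p = 0 := by
  simp [RTpd]

theorem RTpd_neg (l : Fin 4) (F : RTPt → ℝ) (p : RTPt) :
    RTpd l (fun q => -F q) p = -RTpd l F p := by
  simp [RTpd]

theorem RTpd_radial (l : Fin 4) (u : ℝ → ℝ) (p : RTPt) :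
    RTpd l (fun q => u (q 1)) p = ![0, deriv u (p 1), 0, 0] l := by
  fin_cases l <;> simp [RTpd]

theorem RTpd_fibre (l : Fin 4) (v : ℝ → ℝ → ℝ) (p : RTPt) :
    RTpd l (fun q => v (q 2) (q 3)) p = ![0, 0, pX v (p 2) (p 3), pY v (p 2) (p 3)] l := by
  fin_cases l <;> simp [RTpd, pX, pY]

theorem RTpd_radial_div_fibre (l : Fin 4) (u : ℝ → ℝ) {v : ℝ → ℝ → ℝ} {p : RTPt}
    (hv : DifferentiableAt ℝ (uncurry v) (p 2, p 3)) (hv0 : v (p 2) (p 3) ≠ 0) :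
    RTpd l (fun q => u (q 1) / v (q 2) (q 3) ^ 2) p =
      ![0, deriv u (p 1), -2 * u (p 1) * dlogX v (p 2) (p 3),
        -2 * u (p 1) * dlogY v (p 2) (p 3)] l / v (p 2) (p 3) ^ 2 := by
  have deriv_div_sq {w : ℝ → ℝ} {w' s : ℝ} (hw : HasDerivAt w w' s) (hw0 : w s ≠ 0) :
      deriv (fun s => u (p 1) / w s ^ 2) s = -2 * u (p 1) * (w' / w s) / w s ^ 2 := by
    refine (((hasDerivAt_const s (u (p 1))).fun_div (hw.fun_pow 2)
      (pow_ne_zero 2 hw0)).congr_deriv ?_).deriv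
    field_simp
    ring
  fin_cases l
  · simp [RTpd]
  · simp [RTpd]
  · simpa [RTpd, dlogX] using deriv_div_sq (hasDerivAt_pX hv) hv0
  · simpa [RTpd, dlogY] using deriv_div_sq (hasDerivAt_pY hv) hv0

theorem RTlie2_coordinateField (m : Fin 4) (T : Fin 4 → Fin 4 → RTPt → ℝ) (i j : Fin 4)
    (p : RTPt) :
    RTlie2 (fun _ k => if k = m then 1 else 0) T i j p = RTpd m (T i j) p := by
  simp [RTlie2, RTpd_const]

end CoordinateDerivatives

section Curvature

variable (g gInv : Fin 4 → Fin 4 → RTPt → ℝ)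

/-- The Christoffel symbols `Γ^k_{ij}` of a metric `g` with inverse `gInv`; for the
Robinson–Trautman metric this is `RTGamma`. -/
def christoffel (k i j : Fin 4) (p : RTPt) : ℝ :=
  (1 / 2) * ∑ l : Fin 4, gInv k l p *
    (RTpd i (g l j) p + RTpd j (g l i) p - RTpd l (g i j) p)

/-- The mixed curvature tensor `R^α_{jkl}` of a metric `g` with inverse `gInv`, with the sign
convention of `RTRiem`. -/
def curvature (α j k l : Fin 4) (p : RTPt) : ℝ :=
  RTpd l (christoffel g gInv α j k) p - RTpd k (christoffel g gInv α j l) p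
    + ∑ β : Fin 4, (christoffel g gInv β j k p * christoffel g gInv α β l p
      - christoffel g gInv β j l p * christoffel g gInv α β k p)

/-- The Ricci tensor of a metric `g` with inverse `gInv`, as the contraction of the `(0,4)`
curvature tensor with `gInv`; for the Robinson–Trautman metric this is `RTRic`. -/
def ricci (i j : Fin 4) (p : RTPt) : ℝ :=
  ∑ k : Fin 4, ∑ l : Fin 4, gInv k l p * ∑ α : Fin 4, g l α p * curvature g gInv α i k j p

variable {g gInv}

theorem ricci_eq_sum_curvature {p : RTPt}
    (h : ∀ k α, ∑ l, gInv k l p * g l α p = if k = α then 1 else 0) (i j : Fin 4) :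
    ricci g gInv i j p = ∑ k, curvature g gInv k i k j p := by
  refine Finset.sum_congr rfl fun k _ => ?_
  calc ∑ l, gInv k l p * ∑ α, g l α p * curvature g gInv α i k j p
      = ∑ α, (∑ l, gInv k l p * g l α p) * curvature g gInv α i k j p := by
        simp only [Finset.mul_sum, Finset.sum_mul, ← mul_assoc]
        exact Finset.sum_comm
    _ = curvature g gInv k i k j p := by simp [h]

theorem ricci_eq_of_christoffel_eventuallyEq {Γ : Fin 4 → Fin 4 → Fin 4 → RTPt → ℝ} {p : RTPt}
    (h : ∀ k α, ∑ l, gInv k l p * g l α p = if k = α then 1 else 0)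
    (hΓ : ∀ k i j, christoffel g gInv k i j =ᶠ[𝓝 p] Γ k i j) (i j : Fin 4) :
    ricci g gInv i j p =
      ∑ k, RTpd j (Γ k i k) p - ∑ k, RTpd k (Γ k i j) p
        + (∑ k, ∑ β, Γ β i k p * Γ k β j p - ∑ β, Γ β i j p * ∑ k, Γ k β k p) := by
  rw [ricci_eq_sum_curvature h]
  simp only [curvature, RTpd_congr_of_eventuallyEq (hΓ _ _ _), (hΓ _ _ _).eq_of_nhds,
    Finset.sum_add_distrib, Finset.sum_sub_distrib, Finset.mul_sum]
  rw [Finset.sum_comm (f := fun k β => Γ β i j p * Γ k β k p)]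

end Curvature

section RadialProfile

variable (h : ℝ → ℝ) (f : ℝ → ℝ → ℝ)

/-- The metric `-2 h(r) dt² + 2 dt dr - (r / f)² (dx² + dy²)`; `RTg` is the case
`h r = a - 2 b r - d / r`. -/
def profileMetric (i j : Fin 4) (p : RTPt) : ℝ :=
  if i = 0 ∧ j = 0 then -2 * h (p 1)
  else if (i = 0 ∧ j = 1) ∨ (i = 1 ∧ j = 0) then 1
  else if (i = 2 ∧ j = 2) ∨ (i = 3 ∧ j = 3) then -(p 1) ^ 2 / (f (p 2) (p 3)) ^ 2
  else 0

/-- The inverse of `profileMetric`; `RTgInv` is the case `h r = a - 2 b r - d / r`. -/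
def profileMetricInv (i j : Fin 4) (p : RTPt) : ℝ :=
  if i = 1 ∧ j = 1 then 2 * h (p 1)
  else if (i = 0 ∧ j = 1) ∨ (i = 1 ∧ j = 0) then 1
  else if (i = 2 ∧ j = 2) ∨ (i = 3 ∧ j = 3) then -(f (p 2) (p 3)) ^ 2 / (p 1) ^ 2
  else 0

/-- The Christoffel symbols `Γ^k_{ij}` of `profileMetric` in closed form, as one matrix in `i, j`
for each of the values `t, r, x, y` of `k`. -/
def profileChristoffel (k i j : Fin 4) (p : RTPt) : ℝ :=
  let r := p 1
  let φ := f (p 2) (p 3)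
  let P := dlogX f (p 2) (p 3)
  let Q := dlogY f (p 2) (p 3)
  ![!![deriv h r, 0, 0, 0;
       0, 0, 0, 0;
       0, 0, r / φ ^ 2, 0;
       0, 0, 0, r / φ ^ 2],
    !![2 * h r * deriv h r, -deriv h r, 0, 0;
       -deriv h r, 0, 0, 0;
       0, 0, 2 * (r * h r) / φ ^ 2, 0;
       0, 0, 0, 2 * (r * h r) / φ ^ 2],
    !![0, 0, 0, 0;
       0, 0, r⁻¹, 0;
       0, r⁻¹, -P, -Q;
       0, 0, -Q, P],
    !![0, 0, 0, 0;
       0, 0, 0, r⁻¹;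
       0, 0, Q, -P;
       0, r⁻¹, -P, -Q]] k i j

/-- The components of `δ = dx² + dy²`. -/
def fibreForm (i j : Fin 4) : ℝ := if (i = 2 ∧ j = 2) ∨ (i = 3 ∧ j = 3) then 1 else 0

/-- The factor `D` of the header, equal to `F₁ - 2 a + 4 b r` for `h r = a - 2 b r - d / r`. -/
def solitonFactor (p : RTPt) : ℝ :=
  F1 f (p 2) (p 3) - 2 * h (p 1) + (p 1) ^ 2 * deriv (deriv h) (p 1)

variable {f} {p : RTPt}

theorem sum_profileMetricInv_mul (k : Fin 4) (ω : Fin 4 → ℝ) :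
    ∑ l, profileMetricInv h f k l p * ω l =
      ![ω 1, ω 0 + 2 * h (p 1) * ω 1, -(f (p 2) (p 3)) ^ 2 / (p 1) ^ 2 * ω 2,
        -(f (p 2) (p 3)) ^ 2 / (p 1) ^ 2 * ω 3] k := by
  fin_cases k <;> simp [Fin.sum_univ_four, profileMetricInv]

theorem sum_profileMetricInv_mul_profileMetric (hr : p 1 ≠ 0) (hf0 : f (p 2) (p 3) ≠ 0)
    (k α : Fin 4) :
    ∑ l, profileMetricInv h f k l p * profileMetric h f l α p = if k = α then 1 else 0 := by
  rw [sum_profileMetricInv_mul]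
  fin_cases k <;> fin_cases α <;> simp [profileMetric] <;> field_simp

theorem RTpd_profileMetric (hf : DifferentiableAt ℝ (uncurry f) (p 2, p 3))
    (hf0 : f (p 2) (p 3) ≠ 0) (l i j : Fin 4) :
    RTpd l (profileMetric h f i j) p =
      if i = 0 ∧ j = 0 then ![0, -2 * deriv h (p 1), 0, 0] l
      else fibreForm i j * (![0, -2 * p 1, 2 * (p 1) ^ 2 * dlogX f (p 2) (p 3),
        2 * (p 1) ^ 2 * dlogY f (p 2) (p 3)] l / f (p 2) (p 3) ^ 2) := by
  change RTpd l (fun q => profileMetric h f i j q) p = _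
  fin_cases i <;> fin_cases j <;>
    simp [profileMetric, fibreForm, RTpd_const, RTpd_radial _ (fun r => -(2 * h r)),
      RTpd_radial_div_fibre _ (fun r => -r ^ 2) hf hf0]

theorem christoffel_profileMetric (hr : p 1 ≠ 0)
    (hf : DifferentiableAt ℝ (uncurry f) (p 2, p 3)) (hf0 : f (p 2) (p 3) ≠ 0) (k i j : Fin 4) :
    christoffel (profileMetric h f) (profileMetricInv h f) k i j p =
      profileChristoffel h f k i j p := by
  simp only [christoffel, RTpd_profileMetric h hf hf0, sum_profileMetricInv_mul]
  fin_cases k <;> fin_cases i <;> fin_cases j <;>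
    simp [fibreForm, profileChristoffel] <;> field_simp

theorem christoffel_profileMetric_eventuallyEq (hr : p 1 ≠ 0)
    (hf : ContDiffAt ℝ 1 (uncurry f) (p 2, p 3)) (hf0 : f (p 2) (p 3) ≠ 0) (k i j : Fin 4) :
    christoffel (profileMetric h f) (profileMetricInv h f) k i j =ᶠ[𝓝 p]
      profileChristoffel h f k i j := by
  have fibre_tendsto : Tendsto (fun q : RTPt => (q 2, q 3)) (𝓝 p) (𝓝 (p 2, p 3)) :=
    Continuous.tendsto (by fun_prop) p
  filter_upwards [(continuous_apply 1).continuousAt.eventually_ne hr,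
    fibre_tendsto.eventually (eventually_differentiableAt_of_contDiffAt hf),
    fibre_tendsto.eventually (hf.continuousAt.eventually_ne hf0)] with q hqr hqf hqf0
  exact christoffel_profileMetric h hqr hqf hqf0 k i j

variable (f p) in
theorem sum_profileChristoffel_contract (i : Fin 4) :
    ∑ k, profileChristoffel h f k i k p =
      ![0, 2 / p 1, -2 * dlogX f (p 2) (p 3), -2 * dlogY f (p 2) (p 3)] i := by
  rw [Fin.sum_univ_four]
  fin_cases i <;> simp [profileChristoffel] <;> ring

variable (f p) in
theorem sum_RTpd_profileChristoffel_contract (i j : Fin 4) :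
    ∑ k, RTpd j (profileChristoffel h f k i k) p =
      !![0, 0, 0, 0;
         0, -2 / p 1 ^ 2, 0, 0;
         0, 0, -2 * pX (dlogX f) (p 2) (p 3), -2 * pY (dlogX f) (p 2) (p 3);
         0, 0, -2 * pX (dlogY f) (p 2) (p 3), -2 * pY (dlogY f) (p 2) (p 3)] i j := by
  change ∑ k, RTpd j (fun q => profileChristoffel h f k i k q) p = _
  rw [Fin.sum_univ_four]
  fin_cases i <;> fin_cases j <;>
    simp [profileChristoffel, RTpd_const, RTpd_neg, RTpd_radial _ (deriv h), RTpd_radial _ Inv.inv,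
      RTpd_fibre _ (dlogX f), RTpd_fibre _ (dlogY f)] <;>
    ring

variable {h} in
theorem sum_RTpd_profileChristoffel_div (hh : ContDiffAt ℝ 2 h (p 1))
    (hf : DifferentiableAt ℝ (uncurry f) (p 2, p 3)) (hf0 : f (p 2) (p 3) ≠ 0) (i j : Fin 4) :
    ∑ k, RTpd k (profileChristoffel h f k i j) p =
      let r := p 1
      let A := 2 * (h r + r * deriv h r) / f (p 2) (p 3) ^ 2
      let B := pX (dlogX f) (p 2) (p 3) - pY (dlogY f) (p 2) (p 3)
      let C := pX (dlogY f) (p 2) (p 3) + pY (dlogX f) (p 2) (p 3)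
      !![2 * (deriv h r ^ 2 + h r * deriv (deriv h) r), -deriv (deriv h) r, 0, 0;
         -deriv (deriv h) r, 0, 0, 0;
         0, 0, A - B, -C;
         0, 0, -C, A + B] i j := by
  have hd : HasDerivAt h (deriv h (p 1)) (p 1) := (hh.differentiableAt two_ne_zero).hasDerivAt
  have hd' : HasDerivAt (deriv h) (deriv (deriv h) (p 1)) (p 1) :=
    ((hh.derivWithin (m := 1) (by norm_num)).differentiableAt one_ne_zero).hasDerivAt
  have deriv_tt : deriv (fun r => 2 * h r * deriv h r) (p 1) =
      2 * (deriv h (p 1) ^ 2 + h (p 1) * deriv (deriv h) (p 1)) := by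
    rw [((hd.const_mul 2).fun_mul hd').deriv]
    ring
  have deriv_xx : deriv (fun r => 2 * (r * h r)) (p 1) = 2 * (h (p 1) + p 1 * deriv h (p 1)) := by
    rw [(((hasDerivAt_id' (p 1)).fun_mul hd).const_mul 2).deriv, one_mul]
  change ∑ k, RTpd k (fun q => profileChristoffel h f k i j q) p = _
  rw [Fin.sum_univ_four]
  fin_cases i <;> fin_cases j <;>
    simp [profileChristoffel, RTpd_const, RTpd_neg, RTpd_radial _ (deriv h), RTpd_radial _ Inv.inv,
      RTpd_radial _ (fun r => 2 * h r * deriv h r), RTpd_fibre _ (dlogX f), RTpd_fibre _ (dlogY f),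
      RTpd_radial_div_fibre _ (fun r => r) hf hf0,
      RTpd_radial_div_fibre _ (fun r => 2 * (r * h r)) hf hf0, deriv_tt, deriv_xx] <;>
    ring

variable (f) in
theorem sum_profileChristoffel_mul_sub (hr : p 1 ≠ 0) (i j : Fin 4) :
    ∑ k, ∑ β, profileChristoffel h f β i k p * profileChristoffel h f k β j p
        - ∑ β, profileChristoffel h f β i j p * ∑ k, profileChristoffel h f k β k p =
      let r := p 1
      !![2 * deriv h r ^ 2 - 4 * h r * deriv h r / r, 2 * deriv h r / r, 0, 0;
         2 * deriv h r / r, 2 / r ^ 2, 0, 0;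
         0, 0, 0, 0;
         0, 0, 0, 0] i j := by
  simp only [sum_profileChristoffel_contract]
  simp only [Fin.sum_univ_four]
  fin_cases i <;> fin_cases j <;> simp [profileChristoffel] <;> field_simp <;> ring

variable {h} in
theorem ricci_profileMetric (hh : ContDiffAt ℝ 2 h (p 1)) (hr : p 1 ≠ 0)
    (hf : ContDiffAt ℝ 2 (uncurry f) (p 2, p 3)) (hf0 : f (p 2) (p 3) ≠ 0) (i j : Fin 4) :
    ricci (profileMetric h f) (profileMetricInv h f) i j p =
      (deriv (deriv h) (p 1) + 2 * deriv h (p 1) / p 1) * profileMetric h f i j p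
        + solitonFactor h f p / f (p 2) (p 3) ^ 2 * fibreForm i j := by
  have dlog_closed := pX_dlogY_eq_pY_dlogX hf hf0
  have dlog_div := pX_dlogX_add_pY_dlogY hf hf0
  have hf₁ : ContDiffAt ℝ 1 (uncurry f) (p 2, p 3) := hf.of_le one_le_two
  rw [ricci_eq_of_christoffel_eventuallyEq (sum_profileMetricInv_mul_profileMetric h hr hf0)
      (christoffel_profileMetric_eventuallyEq h hr hf₁ hf0),
    sum_RTpd_profileChristoffel_contract,
    sum_RTpd_profileChristoffel_div hh (hf₁.differentiableAt one_ne_zero) hf0,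
    sum_profileChristoffel_mul_sub h f hr]
  have F1_eq : F1 f (p 2) (p 3) =
      -(pX (dlogX f) (p 2) (p 3) + pY (dlogY f) (p 2) (p 3)) * f (p 2) (p 3) ^ 2 := by
    rw [dlog_div]
    field_simp
  fin_cases i <;> fin_cases j <;>
    simp [profileMetric, fibreForm, solitonFactor, F1_eq, dlog_closed] <;> field_simp <;> ring

theorem RTlie2_radial_profileMetric (hf : DifferentiableAt ℝ (uncurry f) (p 2, p 3))
    (hf0 : f (p 2) (p 3) ≠ 0) (i j : Fin 4) :
    RTlie2 (fun _ k => if k = 1 then 1 else 0) (profileMetric h f) i j p =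
      -2 * deriv h (p 1) * ((if i = 0 then 1 else 0) * (if j = 0 then 1 else 0))
        - 2 * p 1 / f (p 2) (p 3) ^ 2 * fibreForm i j := by
  rw [RTlie2_coordinateField, RTpd_profileMetric h hf hf0]
  fin_cases i <;> fin_cases j <;> simp [fibreForm] <;> ring

end RadialProfile

theorem RT_eta_Ricci_soliton_dr_general {h : ℝ → ℝ} {f : ℝ → ℝ → ℝ} {p : RTPt}
    (hh : ContDiffAt ℝ 2 h (p 1)) (hf : ContDiffAt ℝ 2 (uncurry f) (p 2, p 3)) (hr : p 1 ≠ 0)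
    (hf0 : f (p 2) (p 3) ≠ 0) (hD : solitonFactor h f p ≠ 0) (i j : Fin 4) :
    RTlie2 (fun _ k => if k = 1 then 1 else 0) (profileMetric h f) i j p
      + (2 * p 1 / solitonFactor h f p) *
          ricci (profileMetric h f) (profileMetricInv h f) i j p
      - (2 * (p 1 * deriv (deriv h) (p 1) + 2 * deriv h (p 1)) / solitonFactor h f p) *
          profileMetric h f i j p
      + 2 * deriv h (p 1) * ((if i = 0 then (1 : ℝ) else 0) * (if j = 0 then (1 : ℝ) else 0)) =
        0 := by
  rw [RTlie2_radial_profileMetric h (hf.differentiableAt two_ne_zero) hf0,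
    ricci_profileMetric hh hr hf hf0]
  field_simp
  ring

section RobinsonTrautmanProfile

variable (a b d : ℝ)

/-- The radial profile `h` for which `profileMetric h f` is the Robinson–Trautman metric. -/
def rtProfile (r : ℝ) : ℝ := a - 2 * b * r - d / r

theorem RTg_eq_profileMetric (f : ℝ → ℝ → ℝ) : RTg a b d f = profileMetric (rtProfile a b d) f :=
  rfl

theorem RTRic_eq_ricci_profileMetric (f : ℝ → ℝ → ℝ) :
    RTRic a b d f =
      ricci (profileMetric (rtProfile a b d) f) (profileMetricInv (rtProfile a b d) f) :=
  rfl

variable {r : ℝ}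

theorem contDiffAt_rtProfile {n : ℕ∞} (hr : r ≠ 0) : ContDiffAt ℝ n (rtProfile a b d) r := by
  unfold rtProfile
  fun_prop (disch := assumption)

theorem deriv_rtProfile (hr : r ≠ 0) : deriv (rtProfile a b d) r = -2 * b + d / r ^ 2 := by
  refine HasDerivAt.deriv ((((hasDerivAt_id' r).const_mul (2 * b)).const_sub a).fun_sub
    ((hasDerivAt_const r d).fun_div (hasDerivAt_id' r) hr) |>.congr_deriv ?_)
  ring

theorem deriv_deriv_rtProfile (hr : r ≠ 0) :
    deriv (deriv (rtProfile a b d)) r = -2 * d / r ^ 3 := by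
  have h_eq : deriv (rtProfile a b d) =ᶠ[𝓝 r] fun s => -2 * b + d / s ^ 2 :=
    (eventually_ne_nhds hr).mono fun s hs => deriv_rtProfile a b d hs
  rw [h_eq.deriv_eq]
  refine HasDerivAt.deriv (((hasDerivAt_const r d).fun_div ((hasDerivAt_id' r).fun_pow 2)
    (pow_ne_zero 2 hr)).const_add (-2 * b) |>.congr_deriv ?_)
  field_simp
  ring

theorem solitonFactor_rtProfile (f : ℝ → ℝ → ℝ) {p : RTPt} (hr : p 1 ≠ 0) :
    solitonFactor (rtProfile a b d) f p = F1 f (p 2) (p 3) - 2 * a + 4 * b * p 1 := by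
  rw [solitonFactor, deriv_deriv_rtProfile a b d hr, rtProfile]
  field_simp
  ring

end RobinsonTrautmanProfile

/-- the almost `η`-Ricci soliton identity along `X = ∂/∂r`. -/
theorem RT_eta_Ricci_soliton_dr (a b d : ℝ) (f : ℝ → ℝ → ℝ)
    (hf : ContDiff ℝ (⊤ : ℕ∞) (Function.uncurry f)) (hf0 : ∀ x y, f x y ≠ 0) :
    ∀ p : RTPt, p 1 ≠ 0 →
      F1 f (p 2) (p 3) - 2*a + 4*b*p 1 ≠ 0 → ∀ i j : Fin 4,
      RTlie2 (fun _ k => if k = 1 then 1 else 0) (RTg a b d f) i j p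
        + (2*p 1/(F1 f (p 2) (p 3) - 2*a + 4*b*p 1)) * RTRic a b d f i j p
        + (8*b/(F1 f (p 2) (p 3) - 2*a + 4*b*p 1)) * RTg a b d f i j p
        - (2*(-d + 2*b*(p 1)^2)/(p 1)^2)
            * ((if i = 0 then (1:ℝ) else 0) * (if j = 0 then (1:ℝ) else 0)) = 0 := by
  intro p hr hD i j
  rw [← solitonFactor_rtProfile a b d f hr] at hD ⊢
  have key := RT_eta_Ricci_soliton_dr_general (contDiffAt_rtProfile a b d hr)
    (contDiff_infty.mp hf 2).contDiffAt hr (hf0 _ _) hD i j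
  rw [deriv_deriv_rtProfile a b d hr, deriv_rtProfile a b d hr] at key
  rw [RTg_eq_profileMetric, RTRic_eq_ricci_profileMetric]
  convert key using 1
  field_simp
  ring
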